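/- Let (α_k)_{k≥1} be nonnegative real numbers with Σ_{k≥1} k·α_k < ∞. Then the infinite linear system w_k = 1 + Σ_{m>k} 2(m−k)·w_m·α_m, for k = 0, 1, 2, …, has a unique solution (w_k)_{k≥0} with 0 ≤ w_k < ∞ for all k. Moreover, setting c_k := 2·Σ_{m>k} (m−k)·α_m, one has w_k ≤ 1/(1−c_k) < 2 for every k such that c_k < 1/2. -/

import Mathlib

/-!
Write the system as `w = 1 + A w` with the nonnegative kernel `A k m = 2 (m - k) α_m` for `m > k`.
Rows are dominated by the summable row `A 0`, and `V k = exp (∑_{m > k} A 0 m)` satisfies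
`∑_m A k m * V m ≤ V k - 1` by telescoping. Hence `V` is a supersolution, and Knaster–Tarski gives a
solution between `0` and `V`. Moreover `A V ≤ q V` with `q = 1 - 1 / V 0 < 1`, so `A` contracts the
`V`-weighted sup norm. Every nonnegative solution is antitone, thus bounded, and uniqueness follows.
Antitonicity also gives `w k ≤ 1 + c k * w k`, which is the stated bound.
-/

open Filter Topology Set

theorem exists_mem_Icc_isFixedPt_of_monotoneOn {α : Type*} [ConditionallyCompleteLattice α]
    {a b : α} {F : α → α} (hab : a ≤ b) (hmaps : MapsTo F (Icc a b) (Icc a b))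
    (hmono : MonotoneOn F (Icc a b)) : ∃ x ∈ Icc a b, Function.IsFixedPt F x := by
  have : Fact (a ≤ b) := ⟨hab⟩
  let G : Icc a b →o Icc a b :=
    ⟨hmaps.restrict F _ _, fun x y hxy => hmono x.2 y.2 hxy⟩
  exact ⟨G.lfp, G.lfp.2, congrArg Subtype.val G.map_lfp⟩

section Kernel

variable {ι : Type*} {A : ι → ι → ℝ} {f V w w' : ι → ℝ}

/-- `w` is a finite nonnegative solution of the linear system `w = f + A w`. Summability of each row
is part of the notion, since `∑'` of a non-summable family is `0`. -/
structure IsNonnegSolution (A : ι → ι → ℝ) (f w : ι → ℝ) : Prop where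
  nonneg : ∀ k, 0 ≤ w k
  summable : ∀ k, Summable fun m => A k m * w m
  eq_add_tsum : ∀ k, w k = f k + ∑' m, A k m * w m

theorem summable_mul_of_mem_Icc (hA : ∀ k m, 0 ≤ A k m)
    (hVs : ∀ k, Summable fun m => A k m * V m) {u : ι → ℝ} (hu : u ∈ Icc 0 V) (k : ι) :
    Summable fun m => A k m * u m :=
  .of_nonneg_of_le (fun m => mul_nonneg (hA k m) (hu.1 m))
    (fun m => mul_le_mul_of_nonneg_left (hu.2 m) (hA k m)) (hVs k)

theorem exists_isNonnegSolution_of_supersolution (hA : ∀ k m, 0 ≤ A k m) (hf : 0 ≤ f) (hV : 0 ≤ V)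
    (hVs : ∀ k, Summable fun m => A k m * V m) (hAV : ∀ k, f k + ∑' m, A k m * V m ≤ V k) :
    ∃ w, IsNonnegSolution A f w := by
  let F : (ι → ℝ) → ι → ℝ := fun u k => f k + ∑' m, A k m * u m
  have hsum {u : ι → ℝ} (hu : u ∈ Icc 0 V) := summable_mul_of_mem_Icc hA hVs hu
  have hmono : MonotoneOn F (Icc 0 V) := fun u hu v hv huv k =>
    add_le_add_right ((hsum hu k).tsum_le_tsum
      (fun m => mul_le_mul_of_nonneg_left (huv m) (hA k m)) (hsum hv k)) _
  have hmaps : MapsTo F (Icc 0 V) (Icc 0 V) := fun u hu =>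
    ⟨fun k => add_nonneg (hf k) (tsum_nonneg fun m => mul_nonneg (hA k m) (hu.1 m)),
      (hmono hu ⟨hV, le_rfl⟩ hu.2).trans hAV⟩
  obtain ⟨w, hw, hFw⟩ := exists_mem_Icc_isFixedPt_of_monotoneOn hV hmaps hmono
  exact ⟨w, hw.1, hsum hw, fun k => (congrFun hFw k).symm⟩

theorem nonpos_of_le_tsum_mul_of_contracting {d : ι → ℝ} {C q : ℝ} (hA : ∀ k m, 0 ≤ A k m)
    (hVs : ∀ k, Summable fun m => A k m * V m) (hq₀ : 0 ≤ q) (hq₁ : q < 1)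
    (hAV : ∀ k, ∑' m, A k m * V m ≤ q * V k) (hds : ∀ k, Summable fun m => A k m * d m)
    (hd : ∀ k, d k ≤ ∑' m, A k m * d m) (hC : 0 ≤ C) (hdV : ∀ k, d k ≤ C * V k) (k : ι) :
    d k ≤ 0 := by
  have improve {s : ℝ} (hs : 0 ≤ s) (hdsV : ∀ m, d m ≤ s * V m) (k : ι) : d k ≤ s * q * V k :=
    calc d k ≤ ∑' m, A k m * d m := hd k
      _ ≤ ∑' m, s * (A k m * V m) :=
        (hds k).tsum_le_tsum
          (fun m => (mul_le_mul_of_nonneg_left (hdsV m) (hA k m)).trans_eq (mul_left_comm _ _ _))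
          ((hVs k).mul_left s)
      _ = s * ∑' m, A k m * V m := tsum_mul_left
      _ ≤ s * (q * V k) := mul_le_mul_of_nonneg_left (hAV k) hs
      _ = s * q * V k := (mul_assoc _ _ _).symm
  have bound (n : ℕ) : ∀ k, d k ≤ C * q ^ n * V k := by
    induction n with
    | zero => simpa using hdV
    | succ n ih => simpa only [pow_succ, mul_assoc] using improve (by positivity) ih
  have limit : Tendsto (fun n : ℕ => C * q ^ n * V k) atTop (𝓝 0) := by
    simpa using ((tendsto_pow_atTop_nhds_zero_of_lt_one hq₀ hq₁).const_mul C).mul_const (V k)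
  exact ge_of_tendsto' limit fun n => bound n k

namespace IsNonnegSolution

theorem le_of_contracting {C q : ℝ} (hw : IsNonnegSolution A f w) (hw' : IsNonnegSolution A f w')
    (hA : ∀ k m, 0 ≤ A k m) (hVs : ∀ k, Summable fun m => A k m * V m) (hq₀ : 0 ≤ q) (hq₁ : q < 1)
    (hAV : ∀ k, ∑' m, A k m * V m ≤ q * V k) (hC : 0 ≤ C) (hwV : ∀ k, w k ≤ C * V k) :
    w ≤ w' := by
  have hmul_sub (k m : ι) : A k m * (w m - w' m) = A k m * w m - A k m * w' m := mul_sub _ _ _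
  have hdiff (k : ι) : w k - w' k = ∑' m, A k m * (w m - w' m) := by
    simp only [hmul_sub, (hw.summable k).tsum_sub (hw'.summable k)]
    rw [hw.eq_add_tsum k, hw'.eq_add_tsum k, add_sub_add_left_eq_sub]
  have hdiff_summable (k : ι) : Summable fun m => A k m * (w m - w' m) := by
    simpa only [hmul_sub] using (hw.summable k).sub (hw'.summable k)
  intro k
  exact sub_nonpos.mp <| nonpos_of_le_tsum_mul_of_contracting hA hVs hq₀ hq₁ hAV
    hdiff_summable (fun k => (hdiff k).le) hC
    (fun k => (sub_le_self _ (hw'.nonneg k)).trans (hwV k)) k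

end IsNonnegSolution

end Kernel

section TailExp

/-- The weight `k ↦ exp (∑_{m > k} b m)`, which makes the operator `v ↦ ∑_{m > k} b m * v m` a
contraction in the weighted sup norm. -/
noncomputable def tailExp (b : ℕ → ℝ) (k : ℕ) : ℝ :=
  Real.exp (∑' i, b (i + (k + 1)))

variable {b : ℕ → ℝ}

theorem tailExp_pos (b : ℕ → ℝ) (k : ℕ) : 0 < tailExp b k :=
  Real.exp_pos _

theorem one_le_tailExp (hb : 0 ≤ b) (k : ℕ) : 1 ≤ tailExp b k :=
  Real.one_le_exp (tsum_nonneg fun _ => hb _)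

theorem tailExp_eq_exp_mul_succ (hbs : Summable b) (k : ℕ) :
    tailExp b k = Real.exp (b (k + 1)) * tailExp b (k + 1) := by
  rw [tailExp, tailExp, ← Real.exp_add, ((summable_nat_add_iff (k + 1)).2 hbs).tsum_eq_zero_add]
  simp only [zero_add, add_assoc, add_comm 1]

theorem mul_tailExp_succ_le (hbs : Summable b) (k : ℕ) :
    b (k + 1) * tailExp b (k + 1) ≤ tailExp b k - tailExp b (k + 1) := by
  rw [le_sub_iff_add_le, ← add_one_mul, tailExp_eq_exp_mul_succ hbs k]
  exact mul_le_mul_of_nonneg_right (Real.add_one_le_exp _) (tailExp_pos b _).le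

theorem antitone_tailExp (hb : 0 ≤ b) (hbs : Summable b) : Antitone (tailExp b) :=
  antitone_nat_of_succ_le fun k => sub_nonneg.mp <|
    (mul_nonneg (hb _) (tailExp_pos _ _).le).trans (mul_tailExp_succ_le hbs k)

end TailExp

/-- A nonnegative kernel on `ℕ` that is strictly upper triangular and antitone in the row index, and
whose rows are summable; by antitonicity it is enough to ask this of the row `A 0`. -/
structure IsAntitoneTriangular (A : ℕ → ℕ → ℝ) : Prop where
  nonneg : ∀ k m, 0 ≤ A k m
  eq_zero_of_le : ∀ {k m}, m ≤ k → A k m = 0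
  antitone : Antitone A
  summable_zero : Summable (A 0)

namespace IsAntitoneTriangular

variable {A : ℕ → ℕ → ℝ} {f w w' : ℕ → ℝ}

theorem summable (hA : IsAntitoneTriangular A) (k : ℕ) : Summable (A k) :=
  .of_nonneg_of_le (hA.nonneg k) (hA.antitone k.zero_le) hA.summable_zero

theorem mul_tailExp_nonneg (hA : IsAntitoneTriangular A) (k m : ℕ) :
    0 ≤ A k m * tailExp (A 0) m :=
  mul_nonneg (hA.nonneg k m) (tailExp_pos _ _).le

-- The truncation `max k` makes the right-hand side vanish for `m < k`, where the kernel is zero.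
theorem mul_tailExp_succ_le_sub_max (hA : IsAntitoneTriangular A) (k m : ℕ) :
    A k (m + 1) * tailExp (A 0) (m + 1) ≤
      tailExp (A 0) (max k m) - tailExp (A 0) (max k (m + 1)) := by
  rcases le_or_gt k m with hkm | hmk
  · rw [max_eq_right hkm, max_eq_right (hkm.trans m.le_succ)]
    exact (mul_le_mul_of_nonneg_right (hA.antitone k.zero_le _) (tailExp_pos _ _).le).trans
      (mul_tailExp_succ_le hA.summable_zero m)
  · rw [hA.eq_zero_of_le hmk, max_eq_left hmk.le, max_eq_left hmk, zero_mul, sub_self]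

theorem sum_range_mul_tailExp_le (hA : IsAntitoneTriangular A) (k n : ℕ) :
    ∑ m ∈ Finset.range n, A k m * tailExp (A 0) m ≤ tailExp (A 0) k - 1 :=
  calc ∑ m ∈ Finset.range n, A k m * tailExp (A 0) m
      ≤ ∑ m ∈ Finset.range (n + 1), A k m * tailExp (A 0) m :=
        Finset.sum_le_sum_of_subset_of_nonneg (Finset.range_mono n.le_succ)
          fun m _ _ => hA.mul_tailExp_nonneg k m
    _ = ∑ m ∈ Finset.range n, A k (m + 1) * tailExp (A 0) (m + 1) := by
        rw [Finset.sum_range_succ', hA.eq_zero_of_le k.zero_le, zero_mul, add_zero]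
    _ ≤ ∑ m ∈ Finset.range n, (tailExp (A 0) (max k m) - tailExp (A 0) (max k (m + 1))) :=
        Finset.sum_le_sum fun m _ => hA.mul_tailExp_succ_le_sub_max k m
    _ = tailExp (A 0) k - tailExp (A 0) (max k n) := by
        rw [Finset.sum_range_sub' fun m => tailExp (A 0) (max k m), max_eq_left k.zero_le]
    _ ≤ tailExp (A 0) k - 1 := sub_le_sub_left (one_le_tailExp (hA.nonneg 0) _) _

theorem summable_mul_tailExp (hA : IsAntitoneTriangular A) (k : ℕ) :
    Summable fun m => A k m * tailExp (A 0) m :=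
  summable_of_sum_range_le (hA.mul_tailExp_nonneg k) (hA.sum_range_mul_tailExp_le k)

theorem tsum_mul_tailExp_le (hA : IsAntitoneTriangular A) (k : ℕ) :
    ∑' m, A k m * tailExp (A 0) m ≤ tailExp (A 0) k - 1 :=
  Real.tsum_le_of_sum_range_le (hA.mul_tailExp_nonneg k) (hA.sum_range_mul_tailExp_le k)

theorem tsum_mul_tailExp_le_contracting (hA : IsAntitoneTriangular A) (k : ℕ) :
    ∑' m, A k m * tailExp (A 0) m ≤ (1 - (tailExp (A 0) 0)⁻¹) * tailExp (A 0) k := by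
  have hle_one : (tailExp (A 0) 0)⁻¹ * tailExp (A 0) k ≤ 1 :=
    inv_mul_le_one_of_le₀ (antitone_tailExp (hA.nonneg 0) hA.summable_zero k.zero_le)
      (tailExp_pos _ _).le
  linarith [hA.tsum_mul_tailExp_le k]

theorem exists_isNonnegSolution (hA : IsAntitoneTriangular A) (hf : Antitone f) (hf₀ : 0 ≤ f) :
    ∃ w, IsNonnegSolution A f w := by
  have hrow (k m : ℕ) :
      A k m * (f 0 * tailExp (A 0) m) = f 0 * (A k m * tailExp (A 0) m) := mul_left_comm _ _ _
  refine exists_isNonnegSolution_of_supersolution (V := fun k => f 0 * tailExp (A 0) k)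
    hA.nonneg hf₀ (fun k => mul_nonneg (hf₀ 0) (tailExp_pos _ _).le) (fun k => ?_) fun k => ?_
  · simpa only [hrow] using (hA.summable_mul_tailExp k).mul_left (f 0)
  · calc f k + ∑' m, A k m * (f 0 * tailExp (A 0) m)
        = f k + f 0 * ∑' m, A k m * tailExp (A 0) m := by simp only [hrow, tsum_mul_left]
      _ ≤ f 0 + f 0 * (tailExp (A 0) k - 1) :=
        add_le_add (hf k.zero_le) (mul_le_mul_of_nonneg_left (hA.tsum_mul_tailExp_le k) (hf₀ 0))
      _ = f 0 * tailExp (A 0) k := by ring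

theorem antitone_of_isNonnegSolution (hA : IsAntitoneTriangular A) (hf : Antitone f)
    (hw : IsNonnegSolution A f w) : Antitone w := fun j k hjk => by
  rw [hw.eq_add_tsum j, hw.eq_add_tsum k]
  exact add_le_add (hf hjk) <| (hw.summable k).tsum_le_tsum
    (fun m => mul_le_mul_of_nonneg_right (hA.antitone hjk m) (hw.nonneg m)) (hw.summable j)

theorem isNonnegSolution_le (hA : IsAntitoneTriangular A) (hf : Antitone f)
    (hw : IsNonnegSolution A f w) (hw' : IsNonnegSolution A f w') : w ≤ w' := by
  have hone := one_le_tailExp (hA.nonneg 0)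
  refine hw.le_of_contracting hw' hA.nonneg hA.summable_mul_tailExp
    (sub_nonneg.mpr (inv_le_one_of_one_le₀ (hone 0)))
    (sub_lt_self 1 (inv_pos.mpr (tailExp_pos _ _))) hA.tsum_mul_tailExp_le_contracting
    (hw.nonneg 0) fun k => ?_
  calc w k ≤ w 0 := hA.antitone_of_isNonnegSolution hf hw k.zero_le
    _ ≤ w 0 * tailExp (A 0) k := le_mul_of_one_le_right (hw.nonneg 0) (hone k)

theorem isNonnegSolution_unique (hA : IsAntitoneTriangular A) (hf : Antitone f)
    (hw : IsNonnegSolution A f w) (hw' : IsNonnegSolution A f w') : w = w' :=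
  (hA.isNonnegSolution_le hf hw hw').antisymm (hA.isNonnegSolution_le hf hw' hw)

theorem tsum_mul_le_tsum_mul_self (hA : IsAntitoneTriangular A) (hw : Antitone w) {k : ℕ}
    (hws : Summable fun m => A k m * w m) : ∑' m, A k m * w m ≤ (∑' m, A k m) * w k := by
  rw [← tsum_mul_right]
  refine hws.tsum_le_tsum (fun m => ?_) ((hA.summable k).mul_right _)
  rcases le_or_gt m k with hmk | hkm
  · rw [hA.eq_zero_of_le hmk, zero_mul, zero_mul]
  · exact mul_le_mul_of_nonneg_left (hw hkm.le) (hA.nonneg k m)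

theorem isNonnegSolution_apply_le_div (hA : IsAntitoneTriangular A) (hf : Antitone f)
    (hw : IsNonnegSolution A f w) {k : ℕ} (hk : ∑' m, A k m < 1) :
    w k ≤ f k / (1 - ∑' m, A k m) := by
  rw [le_div_iff₀ (sub_pos.mpr hk)]
  linarith [hw.eq_add_tsum k, hA.tsum_mul_le_tsum_mul_self
    (hA.antitone_of_isNonnegSolution hf hw) (hw.summable k)]

end IsAntitoneTriangular

section SlotKernel

/-- The coefficients `2 (m - k) α_m`, `m > k`, of the slot density system; `α 0` never enters. -/
noncomputable def slotKernel (α : ℕ → ℝ) (k m : ℕ) : ℝ :=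
  if k < m then 2 * ((m : ℝ) - (k : ℝ)) * α m else 0

variable {α : ℕ → ℝ}

theorem slotKernel_nonneg (hα : 0 ≤ α) (k m : ℕ) : 0 ≤ slotKernel α k m := by
  unfold slotKernel
  split_ifs with hkm
  · have hcast : (k : ℝ) ≤ m := Nat.cast_le.mpr hkm.le
    exact mul_nonneg (by linarith) (hα m)
  · exact le_rfl

theorem antitone_slotKernel (hα : 0 ≤ α) : Antitone (slotKernel α) := by
  intro j k hjk m
  by_cases hkm : k < m
  · rw [slotKernel, slotKernel, if_pos hkm, if_pos (hjk.trans_lt hkm)]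
    have hcast : (j : ℝ) ≤ k := Nat.cast_le.mpr hjk
    exact mul_le_mul_of_nonneg_right (by linarith) (hα m)
  · rw [slotKernel, if_neg hkm]
    exact slotKernel_nonneg hα j m

theorem slotKernel_zero_left (α : ℕ → ℝ) (m : ℕ) : slotKernel α 0 m = 2 * (m * α m) := by
  rcases m.eq_zero_or_pos with rfl | hm
  · simp [slotKernel]
  · rw [slotKernel, if_pos hm, Nat.cast_zero, sub_zero, mul_assoc]

theorem isAntitoneTriangular_slotKernel (hα : 0 ≤ α) (hsum : Summable fun k : ℕ => (k : ℝ) * α k) :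
    IsAntitoneTriangular (slotKernel α) where
  nonneg := slotKernel_nonneg hα
  eq_zero_of_le hmk := if_neg hmk.not_gt
  antitone := antitone_slotKernel hα
  summable_zero := by simpa only [← slotKernel_zero_left] using hsum.mul_left 2

theorem slotKernel_mul (α w : ℕ → ℝ) (k m : ℕ) :
    slotKernel α k m * w m = if k < m then 2 * ((m : ℝ) - (k : ℝ)) * w m * α m else 0 := by
  rw [slotKernel, ite_mul, zero_mul, mul_right_comm]

theorem tsum_slotKernel (α : ℕ → ℝ) (k : ℕ) :
    ∑' m, slotKernel α k m = 2 * ∑' m : ℕ, if k < m then ((m : ℝ) - (k : ℝ)) * α m else 0 := by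
  simp only [slotKernel, ← tsum_mul_left, mul_ite, mul_zero, mul_assoc]

theorem isNonnegSolution_slotKernel_iff {w : ℕ → ℝ} :
    IsNonnegSolution (slotKernel α) 1 w ↔
      (∀ k, 0 ≤ w k) ∧
        (∀ k : ℕ, Summable fun m : ℕ =>
          if k < m then 2 * ((m : ℝ) - (k : ℝ)) * w m * α m else 0) ∧
        ∀ k : ℕ, w k = 1 + ∑' m : ℕ,
          if k < m then 2 * ((m : ℝ) - (k : ℝ)) * w m * α m else 0 := by
  simp only [← slotKernel_mul]
  exact ⟨fun h => ⟨h.nonneg, h.summable, h.eq_add_tsum⟩, fun ⟨h₀, hs, he⟩ => ⟨h₀, hs, he⟩⟩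

end SlotKernel

/-- Let `(α_k)_{k≥1}` be nonnegative reals with
`Σ_{k≥1} k·α_k < ∞`.  Then the infinite linear system
`w_k = 1 + Σ_{m>k} 2(m−k)·w_m·α_m`, `k = 0, 1, 2, …`, has a unique
(nonnegative, finite, summable) solution `(w_k)_{k≥0}`.  Moreover, setting
`c_k := 2·Σ_{m>k} (m−k)·α_m`, one has `w_k ≤ 1/(1−c_k) < 2` for every `k` with
`c_k < 1/2`. -/
theorem slot_density_system (α : ℕ → ℝ) (hα : ∀ k, 0 ≤ α k)
    (hsum : Summable fun k : ℕ => (k : ℝ) * α k) :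
    ∃ w : ℕ → ℝ,
      ((∀ k, 0 ≤ w k) ∧
        (∀ k : ℕ, Summable fun m : ℕ =>
          if k < m then 2 * ((m : ℝ) - (k : ℝ)) * w m * α m else 0) ∧
        ∀ k : ℕ, w k = 1 + ∑' m : ℕ,
          if k < m then 2 * ((m : ℝ) - (k : ℝ)) * w m * α m else 0) ∧
      (∀ w' : ℕ → ℝ,
        ((∀ k, 0 ≤ w' k) ∧
          (∀ k : ℕ, Summable fun m : ℕ =>
            if k < m then 2 * ((m : ℝ) - (k : ℝ)) * w' m * α m else 0) ∧
          ∀ k : ℕ, w' k = 1 + ∑' m : ℕ,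
            if k < m then 2 * ((m : ℝ) - (k : ℝ)) * w' m * α m else 0) →
        w' = w) ∧
      ∀ k : ℕ,
        2 * (∑' m : ℕ, if k < m then ((m : ℝ) - (k : ℝ)) * α m else 0) < 1 / 2 →
          w k ≤ 1 / (1 - 2 * (∑' m : ℕ, if k < m then ((m : ℝ) - (k : ℝ)) * α m else 0)) ∧
          1 / (1 - 2 * (∑' m : ℕ, if k < m then ((m : ℝ) - (k : ℝ)) * α m else 0)) < 2 := by
  have hA := isAntitoneTriangular_slotKernel hα hsum
  have hone : Antitone (1 : ℕ → ℝ) := antitone_const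
  obtain ⟨w, hw⟩ := hA.exists_isNonnegSolution hone zero_le_one
  refine ⟨w, isNonnegSolution_slotKernel_iff.mp hw, fun w' hw' =>
    hA.isNonnegSolution_unique hone (isNonnegSolution_slotKernel_iff.mpr hw') hw, fun k hk => ?_⟩
  rw [← tsum_slotKernel] at hk ⊢
  refine ⟨hA.isNonnegSolution_apply_le_div hone hw (by linarith), ?_⟩
  rw [div_lt_iff₀ (by linarith)]
  linarith
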